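/- arXiv:2308.08983 — 6 statements merged into one kernel-verified Lean document; each statement's English description precedes it below -/
import Mathlib

section
/- For every labeled P/T Petri net N = (S, A, T), if R1 and R2 are structure-preserving bisimulations on N, then their relational composition R1 ∘ R2 = ⋃_{l1 ∈ R1, l2 ∈ R2} (l1 ∘ l2) is a structure-preserving bisimulation on N. -/
/-- A labeled P/T Petri net over the (countable) type `S` of places and the
(finite) type `A` of labels: a countable set of transitions, each consisting
of a nonempty finite multiset over `S` (the preset), a label in `A`, and a
finite multiset over `S` (the postset).  Markings are finite multisets over `S`. -/
structure PetriNet (S A : Type) where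
  T : Set (Multiset S × A × Multiset S)
  countable_T : T.Countable
  pre_nonempty : ∀ t ∈ T, t.1 ≠ 0

namespace PetriNet

variable {S A : Type} [DecidableEq S]

/-- First projection of a linking: `π1(l)(s1) = Σ_{s2} l(s1,s2)`. -/
def pi1 (l : Multiset (S × S)) : Multiset S := l.map Prod.fst

/-- Second projection of a linking: `π2(l)(s2) = Σ_{s1} l(s1,s2)`. -/
def pi2 (l : Multiset (S × S)) : Multiset S := l.map Prod.snd

/-- A structure-preserving bisimulation on a net: a set `R` of linkings such
that every `l ∈ R` and every `c ⊆ l` satisfy the two transfer properties. -/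
def IsSPBisim (N : PetriNet S A) (R : Set (Multiset (S × S))) : Prop :=
  ∀ l ∈ R, ∀ c ≤ l,
    (∀ t1 ∈ N.T, t1.1 = pi1 c →
      ∃ t2 ∈ N.T, t2.2.1 = t1.2.1 ∧ t2.1 = pi2 c ∧
        ∃ cb : Multiset (S × S),
          pi1 cb = t1.2.2 ∧ pi2 cb = t2.2.2 ∧ l - c + cb ∈ R) ∧
    (∀ t2 ∈ N.T, t2.1 = pi2 c →
      ∃ t1 ∈ N.T, t1.2.1 = t2.2.1 ∧ t1.1 = pi1 c ∧
        ∃ cb : Multiset (S × S),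
          pi1 cb = t1.2.2 ∧ pi2 cb = t2.2.2 ∧ l - c + cb ∈ R)

/-- Structure-preserving bisimilarity of markings. -/
def SPBisimilar (N : PetriNet S A) (m1 m2 : Multiset S) : Prop :=
  ∃ R, N.IsSPBisim R ∧ ∃ l ∈ R, pi1 l = m1 ∧ pi2 l = m2

end PetriNet

namespace PetriNet

/-- Relational composition of two linkings: `h ∈ l1 ∘ l2` iff there is a
finite multiset `k` of triples of places with
`l1(s1,s2) = Σ_{s3} k(s1,s2,s3)`, `l2(s2,s3) = Σ_{s1} k(s1,s2,s3)` and
`h(s1,s3) = Σ_{s2} k(s1,s2,s3)`. -/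
def linkComp {S : Type} (l1 l2 : Multiset (S × S)) : Set (Multiset (S × S)) :=
  { h | ∃ k : Multiset (S × S × S),
      l1 = k.map (fun x => (x.1, x.2.1)) ∧
      l2 = k.map (fun x => (x.2.1, x.2.2)) ∧
      h = k.map (fun x => (x.1, x.2.2)) }

end PetriNet

theorem exists_le_map_eq {α β : Type} (f : α → β) (k : Multiset α) :
    ∀ c : Multiset β, c ≤ k.map f → ∃ k1 k2, k = k1 + k2 ∧ c = k1.map f := by
  classical
  induction k using Multiset.induction_on with
  | empty =>
    intro c hc
    exact ⟨0, 0, by simp, by simpa using hc⟩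
  | cons a k ih =>
    intro c hc
    rw [Multiset.map_cons] at hc
    by_cases ha : f a ∈ c
    · obtain ⟨c', rfl⟩ := Multiset.exists_cons_of_mem ha
      obtain ⟨k1, k2, rfl, rfl⟩ := ih c' ((Multiset.cons_le_cons_iff _).1 hc)
      exact ⟨a ::ₘ k1, k2, by simp, by simp⟩
    · obtain ⟨k1, k2, rfl, rfl⟩ := ih c ((Multiset.le_cons_of_notMem ha).1 hc)
      exact ⟨k1, a ::ₘ k2, by simp, rfl⟩

theorem exists_glue {S : Type} (c1 : Multiset (S × S)) :
    ∀ c2 : Multiset (S × S), c1.map Prod.snd = c2.map Prod.fst →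
      ∃ k : Multiset (S × S × S),
        c1 = k.map (fun x => (x.1, x.2.1)) ∧ c2 = k.map (fun x => (x.2.1, x.2.2)) := by
  induction c1 using Multiset.induction_on with
  | empty =>
    intro c2 h
    refine ⟨0, by simp, ?_⟩
    have h' : c2.map Prod.fst = 0 := by simpa using h.symm
    simpa using h'
  | cons a c ih =>
    intro c2 h
    rw [Multiset.map_cons] at h
    have hm : a.2 ∈ c2.map Prod.fst := by rw [← h]; simp
    obtain ⟨b, hb, hba⟩ := Multiset.mem_map.1 hm
    obtain ⟨c2', rfl⟩ := Multiset.exists_cons_of_mem hb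
    rw [Multiset.map_cons, hba, Multiset.cons_inj_right] at h
    obtain ⟨k, h1, h2⟩ := ih c2' h
    refine ⟨(a.1, a.2, b.2) ::ₘ k, by simp [← h1], ?_⟩
    simp [← h2, ← hba]

/-- the relational composition `R1 ∘ R2 = ⋃_{l1∈R1, l2∈R2} l1 ∘ l2`
of two structure-preserving bisimulations is a structure-preserving
bisimulation. -/
theorem comp_isSPBisim {S A : Type} [DecidableEq S] [Countable S] [Finite A]
    (N : PetriNet S A) (R1 R2 : Set (Multiset (S × S)))
    (h1 : N.IsSPBisim R1) (h2 : N.IsSPBisim R2) :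
    N.IsSPBisim {h | ∃ l1 ∈ R1, ∃ l2 ∈ R2, h ∈ PetriNet.linkComp l1 l2} := by
  rintro l ⟨l1, hl1, l2, hl2, k, e1, e2, e3⟩ c hc
  rw [e3] at hc
  obtain ⟨k1, k2, rfl, rfl⟩ := exists_le_map_eq _ k c hc
  subst e1 e2 e3
  have H1 := h1 _ hl1 (k1.map (fun x => (x.1, x.2.1))) (by simp)
  have H2 := h2 _ hl2 (k1.map (fun x => (x.2.1, x.2.2))) (by simp)
  simp only [Multiset.map_add, add_tsub_cancel_left, PetriNet.pi1, PetriNet.pi2,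
    Multiset.map_map, Function.comp_def] at H1 H2 ⊢
  have key : ∀ cb1 cb2 : Multiset (S × S), cb1.map Prod.snd = cb2.map Prod.fst →
      k2.map (fun x => (x.1, x.2.1)) + cb1 ∈ R1 →
      k2.map (fun x => (x.2.1, x.2.2)) + cb2 ∈ R2 →
      ∃ cb : Multiset (S × S), cb.map Prod.fst = cb1.map Prod.fst ∧
        cb.map Prod.snd = cb2.map Prod.snd ∧
        k2.map (fun x => (x.1, x.2.2)) + cb ∈
          {h | ∃ l1 ∈ R1, ∃ l2 ∈ R2, h ∈ PetriNet.linkComp l1 l2} := by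
    intro cb1 cb2 h m1 m2
    obtain ⟨q, rfl, rfl⟩ := exists_glue cb1 cb2 h
    refine ⟨q.map (fun x => (x.1, x.2.2)), by simp, by simp,
      _, m1, _, m2, k2 + q, by simp, by simp, by simp⟩
  constructor
  · intro t1 ht1 hp
    obtain ⟨t2, ht2, hl, hp2, cb1, a1, b1, m1⟩ := H1.1 t1 ht1 hp
    obtain ⟨t3, ht3, hl', hp3, cb2, a2, b2, m2⟩ := H2.1 t2 ht2 hp2
    obtain ⟨cb, x, y, z⟩ := key cb1 cb2 (b1.trans a2.symm) m1 m2
    exact ⟨t3, ht3, hl'.trans hl, hp3, cb, x.trans a1, y.trans b2, z⟩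
  · intro t3 ht3 hp
    obtain ⟨t2, ht2, hl, hp2, cb2, a2, b2, m2⟩ := H2.2 t3 ht3 hp
    obtain ⟨t1, ht1, hl', hp1, cb1, a1, b1, m1⟩ := H1.2 t2 ht2 hp2
    obtain ⟨cb, x, y, z⟩ := key cb1 cb2 (b1.trans a2.symm) m1 m2
    exact ⟨t1, ht1, hl'.trans hl, hp1, cb, x.trans a1, y.trans b2, z⟩
end

section
/- For every labeled P/T Petri net N = (S, A, T): (i) the union of all structure-preserving bisimulations on N is itself a structure-preserving bisimulation (hence the largest one), and (ii) the relation ~sp on markings (structure-preserving bisimilarity) is an equivalence relation. -/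
namespace PetriNet

theorem exists_triple {S : Type} (l1 : Multiset (S × S)) :
    ∀ l2 : Multiset (S × S), pi2 l1 = pi1 l2 →
      ∃ k : Multiset (S × S × S), k.map (fun p => (p.1, p.2.1)) = l1 ∧
        k.map (fun p => (p.2.1, p.2.2)) = l2 := by
  classical
  induction l1 using Multiset.induction_on with
  | empty =>
    intro l2 h
    have h2 : l2 = 0 := by
      have : Multiset.map Prod.fst l2 = 0 := by simpa [pi1, pi2] using h.symm
      simpa using this
    exact ⟨0, by simp, by simp [h2]⟩
  | cons a l ih =>
    intro l2 h
    have h' : a.2 ::ₘ pi2 l = Multiset.map Prod.fst l2 := by simpa [pi1, pi2] using h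
    have hm : a.2 ∈ Multiset.map Prod.fst l2 := by rw [← h']; simp
    obtain ⟨b, hb, hab⟩ := Multiset.mem_map.1 hm
    obtain ⟨r, rfl⟩ := Multiset.exists_cons_of_mem hb
    rw [Multiset.map_cons, hab, Multiset.cons_inj_right] at h'
    obtain ⟨k, h1, h2⟩ := ih r h'
    refine ⟨(a.1, a.2, b.2) ::ₘ k, by simp [h1], ?_⟩
    rw [Multiset.map_cons, h2, ← hab]

theorem exists_le_map {X Y : Type} (f : X → Y) (k : Multiset X) (c : Multiset Y)
    (h : c ≤ k.map f) : ∃ d r, k = d + r ∧ c = d.map f := by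
  classical
  induction k using Multiset.induction_on generalizing c with
  | empty =>
    refine ⟨0, 0, by simp, ?_⟩
    simpa using h
  | cons a k ih =>
    rw [Multiset.map_cons] at h
    by_cases ha : f a ∈ c
    · obtain ⟨c', rfl⟩ := Multiset.exists_cons_of_mem ha
      obtain ⟨d, r, rfl, rfl⟩ := ih c' ((Multiset.cons_le_cons_iff _).1 h)
      exact ⟨a ::ₘ d, r, by simp, by simp⟩
    · obtain ⟨d, r, rfl, rfl⟩ := ih c ((Multiset.le_cons_of_notMem ha).1 h)
      exact ⟨d, a ::ₘ r, by simp, rfl⟩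

variable {S A : Type} [DecidableEq S]

theorem bisim_refl (N : PetriNet S A) :
    N.IsSPBisim {l | ∃ m : Multiset S, l = m.map (fun x => (x, x))} := by
  rintro l ⟨m, rfl⟩ c hc
  obtain ⟨d, r, rfl, rfl⟩ := exists_le_map _ _ _ hc
  constructor
  · intro t ht h
    refine ⟨t, ht, rfl, by simpa [pi1, pi2] using h, t.2.2.map (fun x => (x, x)),
      by simp [pi1], by simp [pi2], r + t.2.2, ?_⟩
    rw [Multiset.map_add, add_tsub_cancel_left, Multiset.map_add]
  · intro t ht h
    refine ⟨t, ht, rfl, by simpa [pi1, pi2] using h, t.2.2.map (fun x => (x, x)),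
      by simp [pi1], by simp [pi2], r + t.2.2, ?_⟩
    rw [Multiset.map_add, add_tsub_cancel_left, Multiset.map_add]

theorem pi1_swap (l : Multiset (S × S)) : pi1 (l.map Prod.swap) = pi2 l := by
  simp [pi1, pi2]

theorem pi2_swap (l : Multiset (S × S)) : pi2 (l.map Prod.swap) = pi1 l := by
  simp [pi1, pi2]

theorem bisim_symm (N : PetriNet S A) {R : Set (Multiset (S × S))} (hR : N.IsSPBisim R) :
    N.IsSPBisim {l | ∃ k ∈ R, l = k.map Prod.swap} := by
  rintro l ⟨k, hk, rfl⟩ c hc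
  obtain ⟨d, r, rfl, rfl⟩ := exists_le_map _ _ _ hc
  obtain ⟨h1, h2⟩ := hR _ hk d (Multiset.le_add_right _ _)
  rw [add_tsub_cancel_left] at h1 h2
  rw [pi1_swap, pi2_swap, Multiset.map_add, add_tsub_cancel_left]
  constructor
  · intro t ht h
    obtain ⟨u, hu, hl, hp, cb, hc1, hc2, hm⟩ := h2 t ht h
    exact ⟨u, hu, hl, hp, cb.map Prod.swap, by rw [pi1_swap, hc2], by rw [pi2_swap, hc1],
      _, hm, by rw [Multiset.map_add]⟩
  · intro t ht h
    obtain ⟨u, hu, hl, hp, cb, hc1, hc2, hm⟩ := h1 t ht h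
    exact ⟨u, hu, hl, hp, cb.map Prod.swap, by rw [pi1_swap, hc2], by rw [pi2_swap, hc1],
      _, hm, by rw [Multiset.map_add]⟩

theorem bisim_trans (N : PetriNet S A) {R Q : Set (Multiset (S × S))}
    (hR : N.IsSPBisim R) (hQ : N.IsSPBisim Q) :
    N.IsSPBisim {l | ∃ k : Multiset (S × S × S), k.map (fun p => (p.1, p.2.1)) ∈ R ∧
      k.map (fun p => (p.2.1, p.2.2)) ∈ Q ∧ l = k.map (fun p => (p.1, p.2.2))} := by
  rintro l ⟨k, hkR, hkQ, rfl⟩ c hc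
  obtain ⟨d, r, rfl, rfl⟩ := exists_le_map _ _ _ hc
  rw [Multiset.map_add] at hkR hkQ
  obtain ⟨h1, h2⟩ := hR _ hkR _ (Multiset.le_add_right _ _)
  obtain ⟨g1, g2⟩ := hQ _ hkQ _ (Multiset.le_add_right _ _)
  rw [add_tsub_cancel_left] at h1 h2 g1 g2
  rw [Multiset.map_add, add_tsub_cancel_left]
  constructor
  · intro t ht h
    obtain ⟨u, hu, hl, hp, cb, hc1, hc2, hm⟩ := h1 t ht (by simpa [pi1] using h)
    obtain ⟨v, hv, hl', hp', cb', hc1', hc2', hm'⟩ := g1 u hu (by simpa [pi1, pi2] using hp)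
    obtain ⟨e, rfl, rfl⟩ := exists_triple cb cb' (hc2.trans hc1'.symm)
    refine ⟨v, hv, hl'.trans hl, by simpa [pi2] using hp', e.map (fun p => (p.1, p.2.2)),
      by simpa [pi1] using hc1, by simpa [pi2] using hc2', r + e, ?_, ?_, ?_⟩
    · rwa [Multiset.map_add]
    · rwa [Multiset.map_add]
    · rw [Multiset.map_add]
  · intro v hv h
    obtain ⟨u, hu, hl, hp, cb', hc1', hc2', hm'⟩ := g2 v hv (by simpa [pi2] using h)
    obtain ⟨t, ht, hl', hp', cb, hc1, hc2, hm⟩ := h2 u hu (by simpa [pi1, pi2] using hp)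
    obtain ⟨e, rfl, rfl⟩ := exists_triple cb cb' (hc2.trans hc1'.symm)
    refine ⟨t, ht, hl'.trans hl, by simpa [pi1] using hp', e.map (fun p => (p.1, p.2.2)),
      by simpa [pi1] using hc1, by simpa [pi2] using hc2', r + e, ?_, ?_, ?_⟩
    · rwa [Multiset.map_add]
    · rwa [Multiset.map_add]
    · rw [Multiset.map_add]

end PetriNet

/-- the union of all structure-preserving bisimulations on a net
is itself a structure-preserving bisimulation (hence the largest one), and
structure-preserving bisimilarity `~sp` is an equivalence relation on
markings. -/
theorem sUnion_isSPBisim_and_equivalence {S A : Type} [DecidableEq S]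
    [Countable S] [Finite A] (N : PetriNet S A) :
    N.IsSPBisim (⋃₀ {R | N.IsSPBisim R}) ∧
    (∀ R, N.IsSPBisim R → R ⊆ ⋃₀ {R | N.IsSPBisim R}) ∧
    Equivalence N.SPBisimilar := by
  refine ⟨?_, fun R hR => Set.subset_sUnion_of_mem hR, ?_, ?_, ?_⟩
  · rintro l ⟨R, hR, hl⟩ c hc
    obtain ⟨h1, h2⟩ := hR l hl c hc
    constructor
    · intro t ht h
      obtain ⟨u, hu, a, b, cb, d, e, f⟩ := h1 t ht h
      exact ⟨u, hu, a, b, cb, d, e, R, hR, f⟩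
    · intro t ht h
      obtain ⟨u, hu, a, b, cb, d, e, f⟩ := h2 t ht h
      exact ⟨u, hu, a, b, cb, d, e, R, hR, f⟩
  · intro m
    exact ⟨_, N.bisim_refl, _, ⟨m, rfl⟩, by simp [PetriNet.pi1], by simp [PetriNet.pi2]⟩
  · rintro m1 m2 ⟨R, hR, l, hl, h1, h2⟩
    exact ⟨_, N.bisim_symm hR, _, ⟨l, hl, rfl⟩, by rw [PetriNet.pi1_swap, h2],
      by rw [PetriNet.pi2_swap, h1]⟩
  · rintro m1 m2 m3 ⟨R, hR, l, hl, h1, h2⟩ ⟨Q, hQ, l', hl', h1', h2'⟩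
    obtain ⟨e, rfl, rfl⟩ := PetriNet.exists_triple l l' (h2.trans h1'.symm)
    exact ⟨_, N.bisim_trans hR hQ, _, ⟨e, hl, hl', rfl⟩, by simpa [PetriNet.pi1] using h1,
      by simpa [PetriNet.pi2] using h2'⟩
end

section
/- For every labeled P/T Petri net N = (S, A, T): if R1 is a structure-preserving bisimulation on N, then R2 = {(π1(l), π2(l)) | l ∈ R1} is an interleaving bisimulation. Consequently, if m1 ~sp m2, then (1) for every transition t1 with m1[t1⟩m1' there exists a transition t2 with m2[t2⟩m2', |•t1| = |•t2|, ℓ(t1) = ℓ(t2), |t1•| = |t2•|, and m1' ~sp m2'; and (2) symmetrically for every transition t2 with m2[t2⟩m2'. In particular, structure-preserving bisimilarity implies interleaving bisimilarity. -/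
namespace PetriNet

variable {S A : Type} [DecidableEq S]

/-- `N.Fires m t m'`: transition `t` of `N` is enabled at marking `m`
(`•t ⊆ m`) and its firing produces `m' = (m ⊖ •t) ⊕ t•`. -/
def Fires (N : PetriNet S A) (m : Multiset S)
    (t : Multiset S × A × Multiset S) (m' : Multiset S) : Prop :=
  t ∈ N.T ∧ t.1 ≤ m ∧ m' = m - t.1 + t.2.2

/-- Interleaving bisimulation. -/
def IsIntBisim (N : PetriNet S A) (R : Set (Multiset S × Multiset S)) : Prop :=
  ∀ mm ∈ R,
    (∀ t1 m1', N.Fires mm.1 t1 m1' →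
      ∃ t2 m2', N.Fires mm.2 t2 m2' ∧ t1.2.1 = t2.2.1 ∧ (m1', m2') ∈ R) ∧
    (∀ t2 m2', N.Fires mm.2 t2 m2' →
      ∃ t1 m1', N.Fires mm.1 t1 m1' ∧ t1.2.1 = t2.2.1 ∧ (m1', m2') ∈ R)

/-- Interleaving bisimilarity. -/
def IntBisimilar (N : PetriNet S A) (m1 m2 : Multiset S) : Prop :=
  ∃ R, N.IsIntBisim R ∧ (m1, m2) ∈ R

end PetriNet

theorem exists_le_of_le_map {α β : Type} (f : α → β) (l : Multiset α) (m : Multiset β)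
    (h : m ≤ l.map f) : ∃ c ≤ l, c.map f = m := by
  induction l using Quotient.inductionOn with
  | h l =>
  induction m using Quotient.inductionOn with
  | h m =>
  obtain ⟨k, hk, hs⟩ : m.Subperm (l.map f) := h
  obtain ⟨x, hx, rfl⟩ := List.sublist_map_iff.mp hs
  exact ⟨(x : Multiset α), hx.subperm, Quotient.sound hk⟩

theorem map_sub_add_aux {α β : Type} [DecidableEq α] [DecidableEq β] (f : α → β)
    (l c d : Multiset α) (h : c ≤ l) :
    (l - c + d).map f = l.map f - c.map f + d.map f := by
  obtain ⟨e, rfl⟩ := Multiset.le_iff_exists_add.mp h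
  simp

theorem sp_fwd {S A : Type} [DecidableEq S] (N : PetriNet S A)
    (R : Set (Multiset (S × S))) (hR : N.IsSPBisim R) (l : Multiset (S × S)) (hl : l ∈ R)
    (t1 : Multiset S × A × Multiset S) (m1' : Multiset S)
    (hf : N.Fires (PetriNet.pi1 l) t1 m1') :
    ∃ t2 m2', N.Fires (PetriNet.pi2 l) t2 m2' ∧
      Multiset.card t1.1 = Multiset.card t2.1 ∧ t1.2.1 = t2.2.1 ∧
      Multiset.card t1.2.2 = Multiset.card t2.2.2 ∧
      ∃ l' ∈ R, PetriNet.pi1 l' = m1' ∧ PetriNet.pi2 l' = m2' := by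
  obtain ⟨ht, hle, rfl⟩ := hf
  obtain ⟨c, hc, hct⟩ := exists_le_of_le_map _ _ _ hle
  obtain ⟨t2, ht2, hlab, hpre, cb, h1, h2, hm⟩ := (hR l hl c hc).1 t1 ht hct.symm
  refine ⟨t2, _, ⟨ht2, ?_, rfl⟩, ?_, hlab.symm, ?_, _, hm, ?_, ?_⟩
  · rw [hpre]; exact Multiset.map_le_map hc
  · rw [hpre, ← hct]; simp [PetriNet.pi2]
  · rw [← h1, ← h2]; simp [PetriNet.pi1, PetriNet.pi2]
  · rw [← h1, ← hct]; exact map_sub_add_aux _ _ _ _ hc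
  · rw [← h2, hpre]; exact map_sub_add_aux _ _ _ _ hc

theorem sp_bwd {S A : Type} [DecidableEq S] (N : PetriNet S A)
    (R : Set (Multiset (S × S))) (hR : N.IsSPBisim R) (l : Multiset (S × S)) (hl : l ∈ R)
    (t2 : Multiset S × A × Multiset S) (m2' : Multiset S)
    (hf : N.Fires (PetriNet.pi2 l) t2 m2') :
    ∃ t1 m1', N.Fires (PetriNet.pi1 l) t1 m1' ∧
      Multiset.card t1.1 = Multiset.card t2.1 ∧ t1.2.1 = t2.2.1 ∧
      Multiset.card t1.2.2 = Multiset.card t2.2.2 ∧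
      ∃ l' ∈ R, PetriNet.pi1 l' = m1' ∧ PetriNet.pi2 l' = m2' := by
  obtain ⟨ht, hle, rfl⟩ := hf
  obtain ⟨c, hc, hct⟩ := exists_le_of_le_map _ _ _ hle
  obtain ⟨t1, ht1, hlab, hpre, cb, h1, h2, hm⟩ := (hR l hl c hc).2 t2 ht hct.symm
  refine ⟨t1, _, ⟨ht1, ?_, rfl⟩, ?_, hlab, ?_, _, hm, ?_, ?_⟩
  · rw [hpre]; exact Multiset.map_le_map hc
  · rw [hpre, ← hct]; simp [PetriNet.pi1]
  · rw [← h1, ← h2]; simp [PetriNet.pi1, PetriNet.pi2]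
  · rw [← h1, hpre]; exact map_sub_add_aux _ _ _ _ hc
  · rw [← h2, ← hct]; exact map_sub_add_aux _ _ _ _ hc

/-- if `R1` is a structure-preserving bisimulation then
`R2 = {(π1(l), π2(l)) | l ∈ R1}` is an interleaving bisimulation;
consequently, sp-bisimilar markings match each other's transitions by
transitions with the same preset size, the same label and the same postset
size, reaching sp-bisimilar markings; in particular, structure-preserving
bisimilarity implies interleaving bisimilarity. -/
theorem spBisim_implies_intBisim {S A : Type} [DecidableEq S] [Countable S]
    [Finite A] (N : PetriNet S A) :
    (∀ R1, N.IsSPBisim R1 →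
      N.IsIntBisim {mm | ∃ l ∈ R1, PetriNet.pi1 l = mm.1 ∧ PetriNet.pi2 l = mm.2}) ∧
    (∀ m1 m2, N.SPBisimilar m1 m2 →
      (∀ t1 m1', N.Fires m1 t1 m1' →
        ∃ t2 m2', N.Fires m2 t2 m2' ∧
          Multiset.card t1.1 = Multiset.card t2.1 ∧ t1.2.1 = t2.2.1 ∧
          Multiset.card t1.2.2 = Multiset.card t2.2.2 ∧
          N.SPBisimilar m1' m2') ∧
      (∀ t2 m2', N.Fires m2 t2 m2' →
        ∃ t1 m1', N.Fires m1 t1 m1' ∧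
          Multiset.card t1.1 = Multiset.card t2.1 ∧ t1.2.1 = t2.2.1 ∧
          Multiset.card t1.2.2 = Multiset.card t2.2.2 ∧
          N.SPBisimilar m1' m2')) ∧
    (∀ m1 m2, N.SPBisimilar m1 m2 → N.IntBisimilar m1 m2) := by
  have key : ∀ R1, N.IsSPBisim R1 →
      N.IsIntBisim {mm | ∃ l ∈ R1, PetriNet.pi1 l = mm.1 ∧ PetriNet.pi2 l = mm.2} := by
    rintro R hR ⟨m1, m2⟩ ⟨l, hl, rfl, rfl⟩
    constructor
    · intro t1 m1' hf
      obtain ⟨t2, m2', hf2, -, hlab, -, h⟩ := sp_fwd N R hR l hl t1 m1' hf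
      exact ⟨t2, m2', hf2, hlab, h⟩
    · intro t2 m2' hf
      obtain ⟨t1, m1', hf1, -, hlab, -, h⟩ := sp_bwd N R hR l hl t2 m2' hf
      exact ⟨t1, m1', hf1, hlab, h⟩
  refine ⟨key, ?_, ?_⟩
  · rintro _ _ ⟨R, hR, l, hl, rfl, rfl⟩
    constructor
    · intro t1 m1' hf
      obtain ⟨t2, m2', hf2, hc, hlab, hd, h⟩ := sp_fwd N R hR l hl t1 m1' hf
      exact ⟨t2, m2', hf2, hc, hlab, hd, R, hR, h⟩
    · intro t2 m2' hf
      obtain ⟨t1, m1', hf1, hc, hlab, hd, h⟩ := sp_bwd N R hR l hl t2 m2' hf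
      exact ⟨t1, m1', hf1, hc, hlab, hd, R, hR, h⟩
  · rintro m1 m2 ⟨R, hR, h⟩
    exact ⟨_, key R hR, h⟩
end

section
/- For every labeled P/T Petri net N = (S, A, T): if R is a structure-preserving bisimulation on N, then R matches steps, i.e., for all l ∈ R and c ⊆ l: (1) for every step G1 with •G1 = π1(c) there exist a step G2 with ℓ(G1) = ℓ(G2) and •G2 = π2(c), and a linking c̄ with π1(c̄) = G1•, π2(c̄) = G2•, and (l ⊖ c) ⊕ c̄ ∈ R; (2) symmetrically for every step G2 with •G2 = π2(c). Consequently, if R1 is an sp-bisimulation then {(π1(l), π2(l)) | l ∈ R1} is a step bisimulation, so structure-preserving bisimilarity implies step bisimilarity. -/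
namespace PetriNet

variable {S A : Type} [DecidableEq S]

/-- A step of `N`: a finite nonempty multiset of transitions of `N`. -/
def IsStep (N : PetriNet S A) (G : Multiset (Multiset S × A × Multiset S)) : Prop :=
  G ≠ 0 ∧ ∀ t ∈ G, t ∈ N.T

/-- Preset of a step: `•G = ⊕_t G(t)·(•t)`. -/
def stepPre (G : Multiset (Multiset S × A × Multiset S)) : Multiset S :=
  (G.map (fun t => t.1)).sum

/-- Postset of a step: `G• = ⊕_t G(t)·(t•)`. -/
def stepPost (G : Multiset (Multiset S × A × Multiset S)) : Multiset S :=
  (G.map (fun t => t.2.2)).sum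

/-- Label of a step: the multiset of labels of its transitions. -/
def stepLab (G : Multiset (Multiset S × A × Multiset S)) : Multiset A :=
  G.map (fun t => t.2.1)

/-- `N.StepFires m G m'`: the step `G` is enabled at `m` (`•G ⊆ m`) and its
firing produces `m' = (m ⊖ •G) ⊕ G•`. -/
def StepFires (N : PetriNet S A) (m : Multiset S)
    (G : Multiset (Multiset S × A × Multiset S)) (m' : Multiset S) : Prop :=
  N.IsStep G ∧ stepPre G ≤ m ∧ m' = m - stepPre G + stepPost G

/-- Step bisimulation. -/
def IsStepBisim (N : PetriNet S A) (R : Set (Multiset S × Multiset S)) : Prop :=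
  ∀ mm ∈ R,
    (∀ G1 m1', N.StepFires mm.1 G1 m1' →
      ∃ G2 m2', N.StepFires mm.2 G2 m2' ∧ stepLab G1 = stepLab G2 ∧ (m1', m2') ∈ R) ∧
    (∀ G2 m2', N.StepFires mm.2 G2 m2' →
      ∃ G1 m1', N.StepFires mm.1 G1 m1' ∧ stepLab G1 = stepLab G2 ∧ (m1', m2') ∈ R)

/-- Step bisimilarity. -/
def StepBisimilar (N : PetriNet S A) (m1 m2 : Multiset S) : Prop :=
  ∃ R, N.IsStepBisim R ∧ (m1, m2) ∈ R

end PetriNet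

theorem map_split_aux {α β : Type} (f : α → β) (a b : Multiset β) (c : Multiset α)
    (h : a + b = c.map f) :
    ∃ c1 c2, c = c1 + c2 ∧ a = c1.map f ∧ b = c2.map f := by
  induction a using Multiset.induction_on generalizing c with
  | empty => exact ⟨0, c, by simp, by simp, by simpa using h⟩
  | cons x a ih =>
    have hx : x ∈ c.map f := by rw [← h]; simp
    obtain ⟨y, hy, rfl⟩ := Multiset.mem_map.1 hx
    obtain ⟨c', rfl⟩ := Multiset.exists_cons_of_mem hy
    rw [Multiset.map_cons, Multiset.cons_add, Multiset.cons_inj_right] at h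
    obtain ⟨c1, c2, rfl, rfl, rfl⟩ := ih c' h
    exact ⟨y ::ₘ c1, c2, by simp, by simp, rfl⟩

open PetriNet in
theorem match_aux {S A : Type} (T : Set (Multiset S × A × Multiset S))
    (R : Set (Multiset (S × S))) (f g : S × S → S)
    (H : ∀ r c, r + c ∈ R → ∀ t ∈ T, t.1 = c.map f →
      ∃ t2 ∈ T, t2.2.1 = t.2.1 ∧ t2.1 = c.map g ∧
        ∃ cb : Multiset (S × S), cb.map f = t.2.2 ∧ cb.map g = t2.2.2 ∧ r + cb ∈ R)
    (G : Multiset (Multiset S × A × Multiset S)) (hG : ∀ t ∈ G, t ∈ T) :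
    ∀ r c, r + c ∈ R → stepPre G = c.map f →
      ∃ G2 : Multiset (Multiset S × A × Multiset S), (∀ t ∈ G2, t ∈ T) ∧
        stepLab G = stepLab G2 ∧ stepPre G2 = c.map g ∧
        ∃ cb : Multiset (S × S), cb.map f = stepPost G ∧ cb.map g = stepPost G2 ∧ r + cb ∈ R := by
  induction G using Multiset.induction_on with
  | empty =>
    intro r c hr hc
    have : c = 0 := by
      have h2 : (0 : Multiset S) = c.map f := by simpa [stepPre] using hc
      exact Multiset.map_eq_zero.1 h2.symm
    subst this
    exact ⟨0, by simp, rfl, by simp [stepPre], 0, by simp [stepPost], by simp [stepPost], hr⟩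
  | cons t G ih =>
    intro r c hr hc
    have hc' : t.1 + stepPre G = c.map f := by rw [← hc]; simp [stepPre]
    obtain ⟨c1, c2, rfl, h1, h2⟩ := map_split_aux f _ _ c hc'
    obtain ⟨t2, ht2, hl, hp, cb, hf, hg, hR⟩ :=
      H (r + c2) c1 (by rwa [add_assoc, add_comm c2]) t (hG t (by simp)) h1
    obtain ⟨G2, hG2, hl', hp', cb', hf', hg', hR'⟩ :=
      ih (fun t ht => hG t (by simp [ht])) (r + cb) c2 (by rwa [add_right_comm]) h2
    refine ⟨t2 ::ₘ G2, ?_, ?_, ?_, cb + cb', ?_, ?_, ?_⟩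
    · intro s hs
      rcases Multiset.mem_cons.1 hs with rfl | hs
      · exact ht2
      · exact hG2 s hs
    · simp only [stepLab, Multiset.map_cons] at *
      rw [hl, hl']
    · simp only [stepPre, Multiset.map_cons, Multiset.sum_cons, Multiset.map_add] at *
      rw [hp, hp']
    · simp only [stepPost, Multiset.map_cons, Multiset.sum_cons, Multiset.map_add] at *
      rw [hf, hf']
    · simp only [stepPost, Multiset.map_cons, Multiset.sum_cons, Multiset.map_add] at *
      rw [hg, hg']
    · rwa [← add_assoc]

open PetriNet in
theorem step_ne_aux {S A : Type} {G G2 : Multiset (Multiset S × A × Multiset S)}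
    (h : stepLab G = stepLab G2) : G ≠ 0 ↔ G2 ≠ 0 := by
  have := congrArg Multiset.card h
  simp only [stepLab, Multiset.card_map] at this
  rw [← Multiset.card_pos, ← Multiset.card_pos, this]

open PetriNet in
/-- a structure-preserving bisimulation matches steps, i.e., for
all `l ∈ R` and `c ⊆ l`, every step `G1` with `•G1 = π1(c)` is matched by a
step `G2` with the same label multiset, `•G2 = π2(c)`, and a linking `c̄`
projecting on the two postsets with `(l ⊖ c) ⊕ c̄ ∈ R` (and symmetrically);
consequently `{(π1(l), π2(l)) | l ∈ R1}` is a step bisimulation for every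
sp-bisimulation `R1`, so structure-preserving bisimilarity implies step
bisimilarity. -/
theorem spBisim_matches_steps {S A : Type} [DecidableEq S] [Countable S]
    [Finite A] (N : PetriNet S A) :
    (∀ R, N.IsSPBisim R → ∀ l ∈ R, ∀ c ≤ l,
      (∀ G1, N.IsStep G1 → stepPre G1 = pi1 c →
        ∃ G2, N.IsStep G2 ∧ stepLab G1 = stepLab G2 ∧ stepPre G2 = pi2 c ∧
          ∃ cb : Multiset (S × S),
            pi1 cb = stepPost G1 ∧ pi2 cb = stepPost G2 ∧ l - c + cb ∈ R) ∧
      (∀ G2, N.IsStep G2 → stepPre G2 = pi2 c →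
        ∃ G1, N.IsStep G1 ∧ stepLab G1 = stepLab G2 ∧ stepPre G1 = pi1 c ∧
          ∃ cb : Multiset (S × S),
            pi1 cb = stepPost G1 ∧ pi2 cb = stepPost G2 ∧ l - c + cb ∈ R)) ∧
    (∀ R1, N.IsSPBisim R1 →
      N.IsStepBisim {mm | ∃ l ∈ R1, pi1 l = mm.1 ∧ pi2 l = mm.2}) ∧
    (∀ m1 m2, N.SPBisimilar m1 m2 → N.StepBisimilar m1 m2) := by
  have P1 : ∀ R, N.IsSPBisim R → ∀ l ∈ R, ∀ c ≤ l,
      (∀ G1, N.IsStep G1 → stepPre G1 = pi1 c →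
        ∃ G2, N.IsStep G2 ∧ stepLab G1 = stepLab G2 ∧ stepPre G2 = pi2 c ∧
          ∃ cb : Multiset (S × S),
            pi1 cb = stepPost G1 ∧ pi2 cb = stepPost G2 ∧ l - c + cb ∈ R) ∧
      (∀ G2, N.IsStep G2 → stepPre G2 = pi2 c →
        ∃ G1, N.IsStep G1 ∧ stepLab G1 = stepLab G2 ∧ stepPre G1 = pi1 c ∧
          ∃ cb : Multiset (S × S),
            pi1 cb = stepPost G1 ∧ pi2 cb = stepPost G2 ∧ l - c + cb ∈ R) := by
    intro R hR l hl c hc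
    have hlc : l - c + c ∈ R := by rwa [Multiset.sub_add_cancel hc]
    constructor
    · intro G hG hp
      obtain ⟨G2, h1, h2, h3, cb, h4, h5, h6⟩ := match_aux N.T R Prod.fst Prod.snd
        (by
          intro r c hrc t ht htc
          have := (hR _ hrc c (Multiset.le_add_left _ _)).1 t ht htc
          rwa [Multiset.add_sub_cancel_right] at this) G hG.2 (l - c) c hlc hp
      exact ⟨G2, ⟨(step_ne_aux h2).1 hG.1, h1⟩, h2, h3, cb, h4, h5, h6⟩
    · intro G hG hp
      obtain ⟨G2, h1, h2, h3, cb, h4, h5, h6⟩ := match_aux N.T R Prod.snd Prod.fst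
        (by
          intro r c hrc t ht htc
          obtain ⟨t2, a1, a2, a3, cb, a4, a5, a6⟩ :=
            (hR _ hrc c (Multiset.le_add_left _ _)).2 t ht htc
          rw [Multiset.add_sub_cancel_right] at a6
          exact ⟨t2, a1, a2, a3, cb, a5, a4, a6⟩) G hG.2 (l - c) c hlc hp
      exact ⟨G2, ⟨(step_ne_aux h2).1 hG.1, h1⟩, h2.symm, h3, cb, h5, h4, h6⟩
  have P2 : ∀ R1, N.IsSPBisim R1 →
      N.IsStepBisim {mm | ∃ l ∈ R1, pi1 l = mm.1 ∧ pi2 l = mm.2} := by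
    rintro R hR ⟨m1, m2⟩ ⟨l, hl, h1, h2⟩
    dsimp only at h1 h2
    subst h1 h2
    constructor
    · rintro G m' ⟨hG, hle, rfl⟩
      dsimp only at hle ⊢
      obtain ⟨d, hd⟩ := Multiset.le_iff_exists_add.1 hle
      obtain ⟨c, r, rfl, hc, hr⟩ := map_split_aux Prod.fst (stepPre G) d l hd.symm
      obtain ⟨G2, a1, a2, a3, cb, a4, a5, a6⟩ :=
        (P1 R hR _ hl c (Multiset.le_add_right _ _)).1 G hG hc
      rw [add_tsub_cancel_left] at a6
      refine ⟨G2, _, ⟨a1, ?_, rfl⟩, a2, r + cb, a6, ?_, ?_⟩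
      · rw [a3]; simp [pi2]
      · rw [← a4, hc]; simp [pi1]
      · rw [← a5, a3]; simp [pi2]
    · rintro G m' ⟨hG, hle, rfl⟩
      dsimp only at hle ⊢
      obtain ⟨d, hd⟩ := Multiset.le_iff_exists_add.1 hle
      obtain ⟨c, r, rfl, hc, hr⟩ := map_split_aux Prod.snd (stepPre G) d l hd.symm
      obtain ⟨G2, a1, a2, a3, cb, a4, a5, a6⟩ :=
        (P1 R hR _ hl c (Multiset.le_add_right _ _)).2 G hG hc
      rw [add_tsub_cancel_left] at a6
      refine ⟨G2, _, ⟨a1, ?_, rfl⟩, a2, r + cb, a6, ?_, ?_⟩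
      · rw [a3]; simp [pi1]
      · rw [← a4, a3]; simp [pi1]
      · rw [← a5, hc]; simp [pi2]
  refine ⟨P1, P2, ?_⟩
  rintro m1 m2 ⟨R, hR, l, hl, h1, h2⟩
  exact ⟨_, P2 R hR, l, hl, h1, h2⟩
end

section
/- Given a P/T net system N(m0) = (S, A, T, m0), if N(m0) is dynamically reduced (equal to its dynamically reachable subnet), then it is also statically reduced (equal to its statically reachable subnet). -/
namespace PetriNet

variable {S A : Type} [DecidableEq S]

/-- The set `[m0⟩` of markings (dynamically) reachable from `m0`. -/
def Reach (N : PetriNet S A) (m0 : Multiset S) : Set (Multiset S) :=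
  {m | Relation.ReflTransGen (fun x y => ∃ t, N.Fires x t y) m0 m}

/-- Places of the dynamically reachable subnet:
`S' = {s | ∃ m ∈ [m0⟩, m(s) ≥ 1}`. -/
def dynPlaces (N : PetriNet S A) (m0 : Multiset S) : Set S :=
  {s | ∃ m ∈ N.Reach m0, s ∈ m}

/-- Transitions of the dynamically reachable subnet:
`T' = {t ∈ T | ∃ m ∈ [m0⟩, m[t⟩}`. -/
def dynTrans (N : PetriNet S A) (m0 : Multiset S) :
    Set (Multiset S × A × Multiset S) :=
  {t | t ∈ N.T ∧ ∃ m ∈ N.Reach m0, t.1 ≤ m}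

/-- Labels of the dynamically reachable subnet: `A' = {ℓ(t) | t ∈ T'}`. -/
def dynLabs (N : PetriNet S A) (m0 : Multiset S) : Set A :=
  {a | ∃ t ∈ N.dynTrans m0, t.2.1 = a}

/-- `t` is statically enabled by the set `S1` of places: `dom(•t) ⊆ S1`. -/
def statEnabled (N : PetriNet S A) (t : Multiset S × A × Multiset S)
    (S1 : Set S) : Prop :=
  ∀ s ∈ t.1, s ∈ S1

/-- One step of static reachability: `S1 ⟹t S2` for some `t ∈ T` with
`S1⟦t⟩`, `dom(t•) ⊄ S1` and `S2 = S1 ∪ dom(t•)`. -/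
def statStep (N : PetriNet S A) (S1 S2 : Set S) : Prop :=
  ∃ t ∈ N.T, N.statEnabled t S1 ∧ ¬ (∀ s ∈ t.2.2, s ∈ S1) ∧
    S2 = S1 ∪ {s | s ∈ t.2.2}

/-- Static reachability `⟹*`: reflexive-transitive closure of `statStep`. -/
def StatReach (N : PetriNet S A) : Set S → Set S → Prop :=
  Relation.ReflTransGen N.statStep

/-- `Sk = ⟦dom(m0)⟩`, the largest set of places statically reachable from
`dom(m0)`: `dom(m0) ⟹* Sk` and every transition statically enabled at `Sk`
has `dom(t•) ⊆ Sk`. -/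
def IsStatClosure (N : PetriNet S A) (m0 : Multiset S) (Sk : Set S) : Prop :=
  N.StatReach {s | s ∈ m0} Sk ∧
  ∀ t ∈ N.T, N.statEnabled t Sk → ∀ s ∈ t.2.2, s ∈ Sk

/-- Transitions of the statically reachable subnet: `T'' = {t ∈ T | Sk⟦t⟩}`. -/
def statTrans (N : PetriNet S A) (Sk : Set S) :
    Set (Multiset S × A × Multiset S) :=
  {t | t ∈ N.T ∧ N.statEnabled t Sk}

/-- Labels of the statically reachable subnet: `A'' = {ℓ(t) | t ∈ T''}`. -/
def statLabs (N : PetriNet S A) (Sk : Set S) : Set A :=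
  {a | ∃ t ∈ N.statTrans Sk, t.2.1 = a}

end PetriNet

/-- if a P/T net system `N(m0)` is dynamically reduced (it equals
its dynamically reachable subnet), then it is also statically reduced (it
equals its statically reachable subnet). -/
theorem dynReduced_implies_statReduced {S A : Type} [DecidableEq S]
    [Countable S] [Finite A] (N : PetriNet S A) (m0 : Multiset S)
    (Sk : Set S) (hSk : N.IsStatClosure m0 Sk)
    (hS : N.dynPlaces m0 = Set.univ)
    (hT : N.dynTrans m0 = N.T)
    (hA : N.dynLabs m0 = Set.univ) :
    Sk = Set.univ ∧ N.statTrans Sk = N.T ∧ N.statLabs Sk = Set.univ := by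
  obtain ⟨hr, hc⟩ := hSk
  have h0 : ∀ s ∈ m0, s ∈ Sk := by
    have key : ∀ X Y : Set S, N.StatReach X Y → X ⊆ Y := by
      intro X Y h
      induction h with
      | refl => exact subset_rfl
      | tail _ hstep ih =>
        obtain ⟨t, _, _, _, rfl⟩ := hstep
        exact ih.trans Set.subset_union_left
    exact fun s hs => key _ _ hr hs
  have h1 : ∀ m ∈ N.Reach m0, ∀ s ∈ m, s ∈ Sk := by
    intro m hm
    change Relation.ReflTransGen _ m0 m at hm
    induction hm with
    | refl => exact h0
    | tail _ hstep ih =>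
      obtain ⟨t, htT, hle, rfl⟩ := hstep
      intro s hs
      rcases Multiset.mem_add.1 hs with h | h
      · exact ih s (Multiset.mem_of_le (Multiset.sub_le_self _ _) h)
      · exact hc t htT (fun x hx => ih x (Multiset.mem_of_le hle hx)) s h
  have hU : Sk = Set.univ := by
    refine Set.eq_univ_of_forall fun s => ?_
    have : s ∈ N.dynPlaces m0 := hS ▸ Set.mem_univ s
    obtain ⟨m, hm, hs⟩ := this
    exact h1 m hm s hs
  have hT2 : N.statTrans Sk = N.T := by
    ext t
    exact ⟨fun h => h.1, fun h => ⟨h, fun s _ => hU ▸ Set.mem_univ s⟩⟩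
  refine ⟨hU, hT2, ?_⟩
  rw [← hA]
  unfold PetriNet.statLabs PetriNet.dynLabs
  rw [hT2, hT]
end

section
/- Given a P/T net system N(m0) = (S, A, T, m0), if its dynamically reachable subnet is Net_d(N(m0)) = (S', A', T', m0) and its statically reachable subnet is Net_s(N(m0)) = (S'', A'', T'', m0), then S' ⊆ S'', T' ⊆ T'' and A' ⊆ A''. -/
/-- the dynamically reachable subnet is contained in the
statically reachable subnet: `S' ⊆ S''`, `T' ⊆ T''` and `A' ⊆ A''`. -/
theorem dynSubnet_subset_statSubnet {S A : Type} [DecidableEq S]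
    [Countable S] [Finite A] (N : PetriNet S A) (m0 : Multiset S)
    (Sk : Set S) (hSk : N.IsStatClosure m0 Sk) :
    N.dynPlaces m0 ⊆ Sk ∧ N.dynTrans m0 ⊆ N.statTrans Sk ∧
    N.dynLabs m0 ⊆ N.statLabs Sk := by
  obtain ⟨hreach, hclosed⟩ := hSk
  have h0 : ∀ s ∈ m0, s ∈ Sk := by
    have key : ∀ X Y : Set S, N.StatReach X Y → X ⊆ Y := by
      intro X Y h
      induction h with
      | refl => exact subset_rfl
      | tail _ hst ih =>
        obtain ⟨t, _, _, _, rfl⟩ := hst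
        exact ih.trans Set.subset_union_left
    exact fun s hs => key _ _ hreach hs
  have hm : ∀ m, m ∈ N.Reach m0 → ∀ s ∈ m, s ∈ Sk := by
    intro m h
    induction h with
    | refl => exact h0
    | tail _ hst ih =>
      obtain ⟨t, hT, hle, rfl⟩ := hst
      intro s hs
      rcases Multiset.mem_add.1 hs with hs | hs
      · exact ih s (Multiset.mem_of_le (Multiset.sub_le_self _ _) hs)
      · exact hclosed t hT (fun p hp => ih p (Multiset.mem_of_le hle hp)) s hs
  have ht : N.dynTrans m0 ⊆ N.statTrans Sk := by
    rintro t ⟨hT, m, hmr, hle⟩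
    exact ⟨hT, fun p hp => hm m hmr p (Multiset.mem_of_le hle hp)⟩
  refine ⟨?_, ht, ?_⟩
  · rintro s ⟨m, hmr, hs⟩
    exact hm m hmr s hs
  · rintro a ⟨t, h, rfl⟩
    exact ⟨t, ht h, rfl⟩
end
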